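/- For every n-qudit state ρ: MG(ρ) = 0 if and only if ρ is a minimal stabilizer-projection state. -/

import Mathlib

open scoped BigOperators ComplexOrder Classical ENNReal
open Matrix

namespace PaperQI

/-- The computational-basis index set `ℤ_d^n` for an `n`-qudit system. -/
abbrev QV (d n : ℕ) := Fin n → ZMod d

/-- Matrices (linear operators) on the `n`-qudit Hilbert space `(ℂ^d)^{⊗ n}`,
written in the computational basis indexed by `ℤ_d^n`. -/
abbrev Mat (d n : ℕ) := Matrix (QV d n) (QV d n) ℂ

/-- The character `ξ^z = exp(2πi z/d)` for `z ∈ ℤ_d`. -/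
noncomputable def ch (d : ℕ) (z : ZMod d) : ℂ :=
  Complex.exp (2 * Real.pi * Complex.I * (z.val : ℂ) / (d : ℂ))

/-- Dot product on `ℤ_d^n`. -/
def qdot {d n : ℕ} (p k : QV d n) : ZMod d := ∑ i, p i * k i

/-- The `n`-qudit Weyl operator `w(p,q) = ⊗_i ξ^{-2⁻¹ p_i q_i} Z^{p_i} X^{q_i}`
(for odd prime `d`).  Its matrix entries are
`w(p,q)[k+q, k] = ξ^{p·k + 2⁻¹ p·q}`. -/
noncomputable def weyl (d n : ℕ) [Fact (Nat.Prime d)] (p q : QV d n) : Mat d n :=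
  Matrix.of fun k' k =>
    if k' = k + q then ch d (qdot p k + (2 : ZMod d)⁻¹ * qdot p q) else 0

/-- `ρ` is an `n`-qudit state: positive semidefinite with trace one. -/
def IsState (d n : ℕ) [Fact (Nat.Prime d)] (ρ : Mat d n) : Prop :=
  ρ.PosSemidef ∧ ρ.trace = 1

/-- The characteristic function `Ξ_ρ(p,q) = Tr[ρ w(-p,-q)]`. -/
noncomputable def xi (d n : ℕ) [Fact (Nat.Prime d)] (ρ : Mat d n)
    (pq : QV d n × QV d n) : ℂ :=
  (ρ * weyl d n (-pq.1) (-pq.2)).trace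

/-- The mean state `M(ρ) = d^{-n} ∑_{|Ξ_ρ(p,q)| = 1} Ξ_ρ(p,q) w(p,q)`. -/
noncomputable def meanState (d n : ℕ) [Fact (Nat.Prime d)] (ρ : Mat d n) : Mat d n :=
  ((d : ℂ) ^ n)⁻¹ •
    ∑ pq : QV d n × QV d n,
      if ‖xi d n ρ pq‖ = 1 then xi d n ρ pq • weyl d n pq.1 pq.2 else 0

/-- `ρ` is a minimal stabilizer-projection state (MSPS): for some `r ≤ n` there are
mutually commuting Weyl operators `w(p_i,q_i)`, `i = 1,…,r`, whose labels generate a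
subgroup of `V^n` of order `d^r`, and phases `x ∈ ℤ_d^r`, such that
`ρ = d^{-(n-r)} ∏_i ( (1/d) ∑_{k ∈ ℤ_d} (ξ^{x_i} w(p_i,q_i))^k )`. -/
noncomputable def IsMSPS (d n : ℕ) [Fact (Nat.Prime d)] (ρ : Mat d n) : Prop :=
  ∃ r : ℕ, r ≤ n ∧
    ∃ (p q : Fin r → QV d n) (x : Fin r → ZMod d),
      (∀ i j, Commute (weyl d n (p i) (q i)) (weyl d n (p j) (q j))) ∧
      Nat.card (AddSubgroup.closure (Set.range fun i => (p i, q i)) :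
        AddSubgroup (QV d n × QV d n)) = d ^ r ∧
      ρ = ((d : ℂ) ^ (n - r))⁻¹ •
        (List.ofFn fun i =>
          (d : ℂ)⁻¹ • ∑ k : ZMod d, (ch d (x i) • weyl d n (p i) (q i)) ^ k.val).prod

/-- The magic gap `MG(ρ) = 1 - max{|Ξ_ρ(p,q)| : Ξ_ρ(p,q) ≠ 0, |Ξ_ρ(p,q)| ≠ 1}`,
and `MG(ρ) = 0` if this set is empty. -/
noncomputable def magicGap (d n : ℕ) [Fact (Nat.Prime d)] (ρ : Mat d n) : ℝ :=
  let s : Finset ℝ :=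
    (Finset.univ.filter fun pq : QV d n × QV d n =>
      xi d n ρ pq ≠ 0 ∧ ‖xi d n ρ pq‖ ≠ 1).image
      fun pq => ‖xi d n ρ pq‖
  if h : s.Nonempty then 1 - s.max' h else 0

/-- Von Neumann entropy `H(ρ) = -∑ λ_i log λ_i` (natural log, eigenvalues of `ρ`),
with the convention `0 log 0 = 0`; junk value `0` on non-Hermitian matrices. -/
noncomputable def vnEnt {d n : ℕ} [Fact (Nat.Prime d)] (ρ : Mat d n) : ℝ :=
  if h : ρ.IsHermitian then -∑ i, h.eigenvalues i * Real.log (h.eigenvalues i) else 0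

/-- Rényi entropy `H_α` for `α ∈ [0,∞]`:  `H_0 = log rank`, `H_1 = H` (von Neumann),
`H_∞ = -log λ_max`, and `H_α = (1-α)⁻¹ log ∑ λ_i^α` otherwise. -/
noncomputable def renyiEnt {d n : ℕ} [Fact (Nat.Prime d)] (α : ℝ≥0∞) (ρ : Mat d n) : ℝ :=
  if h : ρ.IsHermitian then
    if α = 0 then Real.log (ρ.rank : ℝ)
    else if α = 1 then -∑ i, h.eigenvalues i * Real.log (h.eigenvalues i)
    else if α = ⊤ then -Real.log (⨆ i, h.eigenvalues i)
    else (1 - α.toReal)⁻¹ * Real.log (∑ i, h.eigenvalues i ^ α.toReal)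
  else 0

/-- Matrix logarithm on the support: `log ρ = U diag(log λ_i) U†` via the spectral
decomposition, with `log 0 = 0` on the kernel; junk value `0` off Hermitian matrices. -/
noncomputable def matLog {d n : ℕ} [Fact (Nat.Prime d)] (ρ : Mat d n) : Mat d n :=
  if h : ρ.IsHermitian then
    (h.eigenvectorUnitary : Mat d n) *
      Matrix.diagonal (fun i => (Real.log (h.eigenvalues i) : ℂ)) *
      star (h.eigenvectorUnitary : Mat d n)
  else 0

/-- Matrix real power on the support: `ρ^t = U diag(λ_i^t) U†`, with `0^t = 0` on the
kernel (for `t ≠ 0`); junk value `0` off Hermitian matrices. -/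
noncomputable def matRpow {d n : ℕ} [Fact (Nat.Prime d)] (ρ : Mat d n) (t : ℝ) : Mat d n :=
  if h : ρ.IsHermitian then
    (h.eigenvectorUnitary : Mat d n) *
      Matrix.diagonal (fun i => ((h.eigenvalues i ^ t : ℝ) : ℂ)) *
      star (h.eigenvectorUnitary : Mat d n)
  else 0

/-- Support inclusion `supp ρ ⊆ supp σ`, expressed as `ker σ ⊆ ker ρ`
(the correct notion for positive semidefinite matrices). -/
def suppLE {d n : ℕ} [Fact (Nat.Prime d)] (ρ σ : Mat d n) : Prop :=
  ∀ v : QV d n → ℂ, σ.mulVec v = 0 → ρ.mulVec v = 0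

/-- Relative entropy `D(ρ‖σ) = Tr[ρ(log ρ - log σ)]` when `supp ρ ⊆ supp σ`, else `+∞`. -/
noncomputable def relEnt {d n : ℕ} [Fact (Nat.Prime d)] (ρ σ : Mat d n) : EReal :=
  if suppLE ρ σ then (((ρ * (matLog ρ - matLog σ)).trace.re : ℝ) : EReal) else ⊤

/-- Sandwiched Rényi relative entropy
`D_α(ρ‖σ) = (α-1)⁻¹ log Tr[(σ^{(1-α)/(2α)} ρ σ^{(1-α)/(2α)})^α]` for `α ≠ 1`
(with `+∞` when `supp ρ ⊄ supp σ`), and `D_1 = D` the relative entropy. -/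
noncomputable def sandRenyi {d n : ℕ} [Fact (Nat.Prime d)] (α : ℝ) (ρ σ : Mat d n) :
    EReal :=
  if α = 1 then relEnt ρ σ
  else if suppLE ρ σ then
    let x : ℝ := (α - 1)⁻¹ * Real.log
      ((matRpow (matRpow σ ((1 - α) / (2 * α)) * ρ * matRpow σ ((1 - α) / (2 * α)))
        α).trace.re)
    (x : EReal)
  else ⊤

/-- The key unitary `U|i,j⟩ = |N g₁₁ i - N g₁₀ j, -N g₀₁ i + N g₀₀ j⟩`,
where `N = (det G)⁻¹` in `ℤ_d`. -/
noncomputable def convU (d n : ℕ) [Fact (Nat.Prime d)] (g00 g01 g10 g11 : ZMod d) :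
    Matrix (QV d n × QV d n) (QV d n × QV d n) ℂ :=
  Matrix.of fun kl ij =>
    if kl = ((fun a => (g00 * g11 - g01 * g10)⁻¹ * g11 * ij.1 a
                      - (g00 * g11 - g01 * g10)⁻¹ * g10 * ij.2 a : QV d n),
             (fun a => -((g00 * g11 - g01 * g10)⁻¹ * g01) * ij.1 a
                      + (g00 * g11 - g01 * g10)⁻¹ * g00 * ij.2 a : QV d n))
    then 1 else 0

/-- Tensor (Kronecker) product of two `n`-qudit operators, on the doubled system. -/
def kron {d n : ℕ} (ρ σ : Mat d n) : Matrix (QV d n × QV d n) (QV d n × QV d n) ℂ :=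
  Matrix.of fun ij kl => ρ ij.1 kl.1 * σ ij.2 kl.2

/-- Partial trace over the second `n`-qudit factor. -/
noncomputable def ptrB {d n : ℕ} [Fact (Nat.Prime d)]
    (M : Matrix (QV d n × QV d n) (QV d n × QV d n) ℂ) : Mat d n :=
  Matrix.of fun i i' => ∑ j : QV d n, M (i, j) (i', j)

/-- The convolution `ρ ⊠ σ = Tr_B[U (ρ ⊗ σ) U†]` with parameter matrix
`G = [g₀₀, g₀₁; g₁₀, g₁₁]`. -/
noncomputable def conv (d n : ℕ) [Fact (Nat.Prime d)] (g00 g01 g10 g11 : ZMod d)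
    (ρ σ : Mat d n) : Mat d n :=
  ptrB (convU d n g00 g01 g10 g11 * kron ρ σ * (convU d n g00 g01 g10 g11)ᴴ)

/-- The beam-splitter unitary `U_{s,t}|i,j⟩ = |s i + t j, t i - s j⟩`. -/
noncomputable def bsU (d n : ℕ) [Fact (Nat.Prime d)] (s t : ZMod d) :
    Matrix (QV d n × QV d n) (QV d n × QV d n) ℂ :=
  Matrix.of fun kl ij =>
    if kl = ((fun a => s * ij.1 a + t * ij.2 a : QV d n),
             (fun a => t * ij.1 a - s * ij.2 a : QV d n))
    then 1 else 0

/-- The beam-splitter convolution `ρ ⊠_{s,t} σ = Tr_B[U_{s,t} (ρ ⊗ σ) U_{s,t}†]`. -/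
noncomputable def bsConv (d n : ℕ) [Fact (Nat.Prime d)] (s t : ZMod d)
    (ρ σ : Mat d n) : Mat d n :=
  ptrB (bsU d n s t * kron ρ σ * (bsU d n s t)ᴴ)

/-- Iterated self-convolution: `⊠^0 ρ = ρ` and `⊠^{N+1} ρ = (⊠^N ρ) ⊠ ρ`. -/
noncomputable def bsIter (d n : ℕ) [Fact (Nat.Prime d)] (s t : ZMod d) :
    ℕ → Mat d n → Mat d n
  | 0, ρ => ρ
  | N + 1, ρ => bsConv d n s t (bsIter d n s t N ρ) ρ

/-- `ρ` is the pure stabilizer state `|ψ⟩⟨ψ|` with stabilizer label group `S ⊆ V^n`: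
`S` has order `d^n` and `ψ` is a common eigenvector of all `w(p,q)`, `(p,q) ∈ S`. -/
noncomputable def IsPureStabilizerWithGroup (d n : ℕ) [Fact (Nat.Prime d)]
    (ρ : Mat d n) (S : AddSubgroup (QV d n × QV d n)) : Prop :=
  Nat.card S = d ^ n ∧
    ∃ ψ : QV d n → ℂ, ψ ≠ 0 ∧
      ρ = Matrix.of (fun a b => ψ a * starRingEnd ℂ (ψ b)) ∧
      ∀ pq ∈ S, ∃ c : ℂ, (weyl d n pq.1 pq.2).mulVec ψ = c • ψ

/-- `ρ` is a pure stabilizer state. -/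
noncomputable def IsPureStabilizer (d n : ℕ) [Fact (Nat.Prime d)] (ρ : Mat d n) : Prop :=
  ∃ S : AddSubgroup (QV d n × QV d n), IsPureStabilizerWithGroup d n ρ S

/-- `ρ` is a stabilizer state: a convex combination of pure stabilizer states. -/
noncomputable def IsStabilizerState (d n : ℕ) [Fact (Nat.Prime d)] (ρ : Mat d n) : Prop :=
  ∃ (m : ℕ) (p : Fin m → ℝ) (τ : Fin m → Mat d n),
    (∀ i, 0 ≤ p i) ∧ ∑ i, p i = 1 ∧ (∀ i, IsPureStabilizer d n (τ i)) ∧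
    ρ = ∑ i, (p i : ℂ) • τ i

/-- `U` is a Clifford unitary: a unitary mapping each Weyl operator, under conjugation,
to a complex phase times a Weyl operator. -/
noncomputable def IsClifford (d n : ℕ) [Fact (Nat.Prime d)] (U : Mat d n) : Prop :=
  U ∈ Matrix.unitaryGroup (QV d n) ℂ ∧
    ∀ pq : QV d n × QV d n, ∃ (c : ℂ) (pq' : QV d n × QV d n),
      ‖c‖ = 1 ∧ U * weyl d n pq.1 pq.2 * Uᴴ = c • weyl d n pq'.1 pq'.2

/-- The divergence-based quantum Fisher information `J(ρ; H) = Tr[ρ [H,[H, log ρ]]]`. -/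
noncomputable def fisherJ {d n : ℕ} [Fact (Nat.Prime d)] (ρ H : Mat d n) : ℝ :=
  (ρ * (H * (H * matLog ρ - matLog ρ * H) - (H * matLog ρ - matLog ρ * H) * H)).trace.re

/-- Embed a single-qudit operator at site `k` of an `n`-qudit system
(tensored with the identity elsewhere). -/
noncomputable def embedAt (d n : ℕ) (k : Fin n) (M : Matrix (ZMod d) (ZMod d) ℂ) :
    Mat d n :=
  Matrix.of fun v w => if ∀ i, i ≠ k → v i = w i then M (v k) (w k) else 0

/-- The rank-one projection `H_j^Z = |j⟩⟨j|` onto the eigenvector of `Z`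
with eigenvalue `ξ^j`. -/
noncomputable def projZ (d : ℕ) (j : ZMod d) : Matrix (ZMod d) (ZMod d) ℂ :=
  Matrix.of fun a b => if a = j ∧ b = j then 1 else 0

/-- The rank-one projection `H_j^X` onto the eigenvector of `X` with eigenvalue `ξ^j`;
its entries are `(H_j^X)_{a b} = d⁻¹ ξ^{j(b-a)}`. -/
noncomputable def projX (d : ℕ) (j : ZMod d) : Matrix (ZMod d) (ZMod d) ℂ :=
  Matrix.of fun a b => (d : ℂ)⁻¹ * ch d (j * (b - a))

/-- Total Fisher information
`J(ρ) = ∑_{k=1}^n ∑_{j ∈ ℤ_d} J(ρ; H_j^{X_k}) + J(ρ; H_j^{Z_k})`. -/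
noncomputable def fisherTotal (d n : ℕ) [Fact (Nat.Prime d)] (ρ : Mat d n) : ℝ :=
  ∑ k : Fin n, ∑ j : ZMod d,
    (fisherJ ρ (embedAt d n k (projX d j)) + fisherJ ρ (embedAt d n k (projZ d j)))

/-- Holevo capacity of a channel `E`:
`χ(E) = sup H(∑ p_i E(ρ_i)) - ∑ p_i H(E(ρ_i))` over finite ensembles of states. -/
noncomputable def holevoCap (d n : ℕ) [Fact (Nat.Prime d)] (E : Mat d n → Mat d n) : ℝ :=
  ⨆ m : ℕ, ⨆ p : Fin m → ℝ, ⨆ ρs : Fin m → Mat d n,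
    ⨆ _ : (∀ i, 0 ≤ p i) ∧ ∑ i, p i = 1 ∧ ∀ i, IsState d n (ρs i),
      (vnEnt (∑ i, (p i : ℂ) • E (ρs i)) - ∑ i, p i * vnEnt (E (ρs i)))

/-- Hilbert–Schmidt norm `‖A‖₂ = (Tr[A†A])^{1/2}`. -/
noncomputable def hsNorm {d n : ℕ} [Fact (Nat.Prime d)] (A : Mat d n) : ℝ :=
  Real.sqrt ((Aᴴ * A).trace.re)

/-- Trace norm `‖A‖₁ = Tr[(A†A)^{1/2}]`. -/
noncomputable def trNorm {d n : ℕ} [Fact (Nat.Prime d)] (A : Mat d n) : ℝ :=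
  (matRpow (Aᴴ * A) (2⁻¹ : ℝ)).trace.re

/-- Tensor product of an `n₁`-qudit operator with an `n₂`-qudit operator,
as an `(n₁+n₂)`-qudit operator. -/
def tensorMat (d n₁ n₂ : ℕ) (ρ₁ : Mat d n₁) (ρ₂ : Mat d n₂) : Mat d (n₁ + n₂) :=
  Matrix.of fun v w =>
    ρ₁ (fun i => v (Fin.castAdd n₂ i)) (fun i => w (Fin.castAdd n₂ i)) *
    ρ₂ (fun j => v (Fin.natAdd n₁ j)) (fun j => w (Fin.natAdd n₁ j))

/-! ### Qubit (`d = 2`) specific definitions -/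

/-- The `n`-qubit Weyl (Pauli) operator `w(p,q) = ⊗_i i^{-p_i q_i} Z^{p_i} X^{q_i}`. -/
noncomputable def weyl2 (n : ℕ) (p q : Fin n → ZMod 2) :
    Matrix (Fin n → ZMod 2) (Fin n → ZMod 2) ℂ :=
  Matrix.of fun k' k =>
    if k' = k + q then
      ∏ i, ((-Complex.I) ^ ((p i).val * (q i).val) *
        (-1 : ℂ) ^ ((p i * (k i + q i)).val))
    else 0

/-- The `n`-qubit characteristic function `Ξ_ρ(p,q) = Tr[ρ w(p,q)†]`. -/
noncomputable def xi2 (n : ℕ) (ρ : Matrix (Fin n → ZMod 2) (Fin n → ZMod 2) ℂ)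
    (pq : (Fin n → ZMod 2) × (Fin n → ZMod 2)) : ℂ :=
  (ρ * (weyl2 n pq.1 pq.2)ᴴ).trace

/-- The logarithmic magic gap
`LMG(ρ) = -log₂ max{|Ξ_ρ(p,q)| : Ξ_ρ(p,q) ≠ 0, |Ξ_ρ(p,q)| ≠ 1}` (`0` if the set is
empty). -/
noncomputable def lmg (n : ℕ) (ρ : Matrix (Fin n → ZMod 2) (Fin n → ZMod 2) ℂ) : ℝ :=
  let s : Finset ℝ :=
    (Finset.univ.filter fun pq : (Fin n → ZMod 2) × (Fin n → ZMod 2) =>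
      xi2 n ρ pq ≠ 0 ∧ ‖xi2 n ρ pq‖ ≠ 1).image
      fun pq => ‖xi2 n ρ pq‖
  if h : s.Nonempty then -Real.logb 2 (s.max' h) else 0

/-- `U` is an `n`-qubit Clifford unitary. -/
noncomputable def IsClifford2 (n : ℕ) (U : Matrix (Fin n → ZMod 2) (Fin n → ZMod 2) ℂ) :
    Prop :=
  U ∈ Matrix.unitaryGroup (Fin n → ZMod 2) ℂ ∧
    ∀ pq : (Fin n → ZMod 2) × (Fin n → ZMod 2),
      ∃ (c : ℂ) (pq' : (Fin n → ZMod 2) × (Fin n → ZMod 2)),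
        ‖c‖ = 1 ∧ U * weyl2 n pq.1 pq.2 * Uᴴ = c • weyl2 n pq'.1 pq'.2

/-- The T gate `diag(1, e^{iπ/4})` acting on qubit `k` of an `n`-qubit system. -/
noncomputable def tGateAt (n : ℕ) (k : Fin n) :
    Matrix (Fin n → ZMod 2) (Fin n → ZMod 2) ℂ :=
  embedAt 2 n k (Matrix.of fun a b =>
    if a = b then (if a = 0 then 1 else Complex.exp (Real.pi * Complex.I / 4)) else 0)

/-- An `n`-qubit state: positive semidefinite with trace one. -/
def IsState2 (n : ℕ) (ρ : Matrix (Fin n → ZMod 2) (Fin n → ZMod 2) ℂ) : Prop :=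
  ρ.PosSemidef ∧ ρ.trace = 1

end PaperQI

namespace PaperQI

section aux
variable {d n : ℕ} [Fact (Nat.Prime d)]

theorem ch_eq (z : ZMod d) : ch d z = ZMod.stdAddChar z := by
  rw [ZMod.stdAddChar_apply, ZMod.toCircle_apply]; rfl

theorem ch_add (a b : ZMod d) : ch d (a + b) = ch d a * ch d b := by
  simp only [ch_eq, AddChar.map_add_eq_mul]

theorem ch_zero : ch d (0 : ZMod d) = 1 := by
  simp only [ch_eq, AddChar.map_zero_eq_one]

theorem ch_eq_one {a : ZMod d} (h : ch d a = 1) : a = 0 := by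
  apply ZMod.injective_stdAddChar
  rw [← ch_eq, h, AddChar.map_zero_eq_one]

theorem ch_norm (a : ZMod d) : ‖ch d a‖ = 1 := by
  rw [ch_eq, ZMod.stdAddChar_apply, Circle.norm_coe]

theorem ch_neg_mul (a : ZMod d) : ch d (-a) * ch d a = 1 := by
  rw [← ch_add]; simp [ch_zero]

theorem ch_ne (a : ZMod d) : ch d a ≠ 0 := by
  intro h; have := ch_norm a; simp [h] at this

theorem ch_conj (a : ZMod d) : star (ch d a) = ch d (-a) := by
  have h1 : star (ch d a) * ch d a = 1 := by
    have := Complex.conj_mul' (ch d a)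
    rw [ch_norm] at this; simpa using this
  exact mul_right_cancel₀ (ch_ne a) (h1.trans (ch_neg_mul a).symm)

theorem ch_pow (a : ZMod d) (k : ℕ) : ch d a ^ k = ch d (k * a) := by
  rw [ch_eq, ch_eq, ← AddChar.map_nsmul_eq_pow, nsmul_eq_mul]

theorem exists_ch {c : ℂ} (h : c ^ d = 1) : ∃ x : ZMod d, ch d x = c := by
  have hp : IsPrimitiveRoot (ch d 1) d := by
    have hc : ∀ k : ℕ, ch d 1 ^ k = 1 ↔ d ∣ k := by
      intro k
      rw [ch_pow, mul_one, ← ZMod.natCast_eq_zero_iff]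
      exact ⟨ch_eq_one, fun h => by rw [h, ch_zero]⟩
    exact ⟨(hc d).2 dvd_rfl, fun k hk => (hc k).1 hk⟩
  obtain ⟨i, -, hi⟩ := hp.eq_pow_of_pow_eq_one h
  exact ⟨i, by rw [← hi, ch_pow, mul_one]⟩

theorem qdot_eq (a b : QV d n) : qdot a b = a ⬝ᵥ b := rfl

theorem sum_ch (m : QV d n) : ∑ p : QV d n, ch d (qdot p m) = if m = 0 then (d : ℂ) ^ n else 0 := by
  split_ifs with h
  · subst h; simp [qdot_eq, ch_zero, ZMod.card]
  · obtain ⟨i, hi⟩ := Function.ne_iff.1 h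
    let ψ : AddChar (QV d n) ℂ :=
      { toFun := fun p => ch d (qdot p m)
        map_zero_eq_one' := by simp [qdot_eq, ch_zero]
        map_add_eq_mul' := by intro a b; simp [qdot_eq, ch_add, add_dotProduct] }
    have hψ : ψ ≠ 0 := by
      intro h0
      have : ψ (Pi.single i 1) = 1 := by rw [h0]; rfl
      have h2 : ch d (qdot (Pi.single i 1) m) = 1 := this
      rw [qdot_eq, single_one_dotProduct] at h2
      exact hi (ch_eq_one h2)
    exact AddChar.sum_eq_zero_iff_ne_zero.2 hψ

/-- Weyl operator on a pair. -/
noncomputable def W (a : QV d n × QV d n) : Mat d n := weyl d n a.1 a.2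

/-- symplectic form -/
def sy (a b : QV d n × QV d n) : ZMod d := qdot a.1 b.2 - qdot b.1 a.2

theorem two_inv (hd : Odd d) : (2 : ZMod d)⁻¹ * 2 = 1 := by
  apply inv_mul_cancel₀
  intro h
  have h2 : ((2 : ℕ) : ZMod d) = 0 := by exact_mod_cast h
  rw [ZMod.natCast_eq_zero_iff] at h2
  have := (Nat.prime_dvd_prime_iff_eq (Fact.out) Nat.prime_two).1 h2
  subst this
  exact absurd hd (by decide)

theorem W_apply (a : QV d n × QV d n) (k' k : QV d n) :
    W a k' k = if k' = k + a.2 then ch d (qdot a.1 k + (2 : ZMod d)⁻¹ * qdot a.1 a.2) else 0 := rfl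

theorem W_mul (hd : Odd d) (a b : QV d n × QV d n) :
    W a * W b = ch d ((2 : ZMod d)⁻¹ * sy a b) • W (a + b) := by
  have h2 := two_inv (d := d) hd
  ext k' k
  rw [Matrix.mul_apply, Matrix.smul_apply, Finset.sum_eq_single (k + b.2)]
  · simp only [W_apply, if_true, Prod.fst_add, Prod.snd_add, smul_eq_mul]
    rw [show k + b.2 + a.2 = k + (a.2 + b.2) by abel]
    split_ifs with h
    · rw [← ch_add, ← ch_add]
      congr 1
      simp only [qdot_eq, sy, add_dotProduct, dotProduct_add]
      linear_combination (-(a.1 ⬝ᵥ b.2)) * h2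
    · simp
  · intro j _ hj
    simp [W_apply, hj]
  · simp

theorem W_zero : W (0 : QV d n × QV d n) = 1 := by
  ext k' k
  simp [W_apply, Matrix.one_apply, qdot_eq, ch_zero]

theorem W_star (a : QV d n × QV d n) (hd : Odd d) : (W a)ᴴ = W (-a) := by
  have h2 := two_inv (d := d) hd
  ext k' k
  simp only [Matrix.conjTranspose_apply, W_apply, Prod.fst_neg, Prod.snd_neg]
  by_cases h : k = k' + a.2
  · have h' : k' = k + -a.2 := by rw [h]; abel
    rw [if_pos h, if_pos h', ch_conj]
    congr 1
    rw [h]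
    simp only [qdot_eq, neg_dotProduct, dotProduct_add, dotProduct_neg]
    linear_combination (-(a.1 ⬝ᵥ a.2)) * h2
  · have h' : ¬ k' = k + -a.2 := by
      intro h'; apply h; rw [h']; abel
    rw [if_neg h, if_neg h', star_zero]

theorem sy_self (a : QV d n × QV d n) : sy a a = 0 := by simp [sy]
theorem sy_neg_self (a : QV d n × QV d n) : sy (-a) a = 0 := by simp [sy, qdot_eq]
theorem sy_anti (a b : QV d n × QV d n) : sy a b = - sy b a := by simp [sy]
theorem sy_add (a b c : QV d n × QV d n) : sy a (b + c) = sy a b + sy a c := by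
  simp [sy, qdot_eq, add_dotProduct, dotProduct_add]; ring
theorem sy_smul (a b : QV d n × QV d n) (k : ZMod d) : sy a (k • b) = k * sy a b := by
  simp [sy, qdot_eq, dotProduct_smul, smul_dotProduct, mul_sub]
theorem sy_zero (a : QV d n × QV d n) : sy a 0 = 0 := by simp [sy, qdot_eq]

theorem W_mul_of_sy (hd : Odd d) {a b : QV d n × QV d n} (h : sy a b = 0) :
    W a * W b = W (a + b) := by
  rw [W_mul hd, h, mul_zero, ch_zero, one_smul]

theorem W_neg_mul (hd : Odd d) (a : QV d n × QV d n) : W (-a) * W a = 1 := by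
  rw [W_mul_of_sy hd (sy_neg_self a), neg_add_cancel, W_zero]

theorem W_pow (hd : Odd d) (a : QV d n × QV d n) (k : ℕ) : W a ^ k = W ((k : ZMod d) • a) := by
  induction k with
  | zero => simp [W_zero]
  | succ k ih =>
    rw [pow_succ', ih, W_mul_of_sy hd (by rw [sy_smul, sy_self, mul_zero])]
    congr 1
    push_cast
    rw [add_smul, one_smul, add_comm]

theorem W_ne_zero (hd : Odd d) (a : QV d n × QV d n) : W a ≠ 0 := by
  intro h
  have := W_neg_mul hd a
  rw [h, mul_zero] at this
  exact zero_ne_one this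

theorem sy_of_smul_comm (hd : Odd d) {a b : QV d n × QV d n} {M : Mat d n} (hM : W (a + b) * M ≠ 0)
    (h : W a * W b * M = W b * W a * M) : sy a b = 0 := by
  have h2 := two_inv (d := d) hd
  rw [W_mul hd, W_mul hd, add_comm b a, smul_mul_assoc, smul_mul_assoc, sy_anti b a] at h
  have h3 := smul_left_injective ℂ hM h
  have h4 : ch d (sy a b) = 1 := by
    rw [← ch_neg_mul ((2 : ZMod d)⁻¹ * sy a b), ← mul_neg, ← h3, ← ch_add]
    congr 1
    linear_combination (-(sy a b)) * h2
  exact ch_eq_one h4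

theorem sy_of_commute (hd : Odd d) {a b : QV d n × QV d n} (h : Commute (W a) (W b)) :
    sy a b = 0 :=
  sy_of_smul_comm (M := 1) hd (by rw [mul_one]; exact W_ne_zero hd _) (by rw [h.eq])

theorem trace_W (a : QV d n × QV d n) : (W a).trace = if a = 0 then (d : ℂ) ^ n else 0 := by
  obtain ⟨p, q⟩ := a
  by_cases hq : q = 0
  · subst hq
    have : (W (p, (0 : QV d n))).trace = ∑ k : QV d n, ch d (qdot k p) := by
      refine Finset.sum_congr rfl fun k _ => ?_
      simp [W_apply, qdot_eq, dotProduct_comm]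
    rw [this, sum_ch]
    simp [Prod.ext_iff]
  · rw [if_neg (by simp [Prod.ext_iff, hq])]
    refine Finset.sum_eq_zero fun k _ => ?_
    simp [W_apply, hq]

theorem xi_eq (ρ : Mat d n) (a : QV d n × QV d n) : xi d n ρ a = (ρ * W (-a)).trace := rfl

theorem complete (hd : Odd d) (ρ : Mat d n) :
    ρ = ((d : ℂ) ^ n)⁻¹ • ∑ a : QV d n × QV d n, xi d n ρ a • W a := by
  have h2 := two_inv (d := d) hd
  have hd0 : (d : ℂ) ^ n ≠ 0 := pow_ne_zero _ (by exact_mod_cast (Fact.out : d.Prime).ne_zero)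
  rw [eq_inv_smul_iff₀ hd0]
  ext i j
  rw [Matrix.smul_apply, Matrix.sum_apply, Fintype.sum_prod_type]
  have key : ∀ p : QV d n, ∑ q, (xi d n ρ (p, q) • W (p, q)) i j
      = ∑ k, ρ k (k + (j - i)) * ch d (qdot p (i - k)) := by
    intro p
    rw [Finset.sum_eq_single (i - j)]
    · rw [xi_eq, Matrix.smul_apply, Matrix.trace, smul_eq_mul, Finset.sum_mul]
      refine Finset.sum_congr rfl fun k _ => ?_
      rw [Matrix.diag_apply, Matrix.mul_apply, Finset.sum_eq_single (k + (j - i))]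
      · rw [W_apply, W_apply, if_pos (by simp), if_pos (by simp), mul_assoc, ← ch_add]
        congr 2
        simp only [qdot_eq, Prod.fst_neg, Prod.snd_neg, neg_dotProduct,
          dotProduct_neg, dotProduct_sub]
        linear_combination (p ⬝ᵥ i - p ⬝ᵥ j) * h2
      · intro l _ hl
        rw [W_apply, if_neg, mul_zero]
        intro h; apply hl; rw [h]; simp
      · simp
    · intro q _ hq
      rw [Matrix.smul_apply, W_apply, if_neg, smul_zero]
      intro h; apply hq; simp only at h; rw [h]; abel
    · simp
  rw [Finset.sum_congr rfl fun p _ => key p, Finset.sum_comm]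
  simp_rw [← Finset.mul_sum, sum_ch]
  rw [Finset.sum_eq_single i]
  · simp [mul_comm]
  · intro k _ hk
    rw [if_neg (by rw [sub_eq_zero]; exact fun h => hk h.symm), mul_zero]
  · simp


theorem term_pow (hd : Odd d) (x : ZMod d) (a : QV d n × QV d n) (k : ZMod d) :
    (ch d x • weyl d n a.1 a.2) ^ k.val = ch d (k * x) • W (k • a) := by
  have := W_pow hd a k.val
  rw [W] at this
  rw [smul_pow, this, ch_pow, ZMod.natCast_zmod_val]

theorem sy_sum {r : ℕ} (a : QV d n × QV d n) (v : Fin r → QV d n × QV d n)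
    (h : ∀ i, sy a (v i) = 0) (k : Fin r → ZMod d) : sy a (∑ i, k i • v i) = 0 := by
  induction r with
  | zero => simp [sy_zero]
  | succ r ih =>
    rw [Fin.sum_univ_succ, sy_add, sy_smul, h, mul_zero, zero_add]
    exact ih (fun i => v i.succ) (fun i => h _) (fun i => k i.succ)

theorem prod_expand (hd : Odd d) {r : ℕ} (v : Fin r → QV d n × QV d n) (x : Fin r → ZMod d)
    (h : ∀ i j, sy (v i) (v j) = 0) :
    (List.ofFn fun i => (d : ℂ)⁻¹ • ∑ k : ZMod d,
      (ch d (x i) • weyl d n (v i).1 (v i).2) ^ k.val).prod =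
    ((d : ℂ) ^ r)⁻¹ • ∑ k : Fin r → ZMod d, ch d (∑ i, k i * x i) • W (∑ i, k i • v i) := by
  induction r with
  | zero => simp [ch_zero, W_zero]
  | succ r ih =>
    rw [List.ofFn_succ, List.prod_cons,
      ih (fun i => v i.succ) (fun i => x i.succ) (fun i j => h _ _)]
    rw [smul_mul_smul_comm, ← mul_inv, ← pow_succ']
    congr 1
    rw [Finset.sum_mul_sum, ← (Fin.consEquiv fun _ => ZMod d).sum_comp, Fintype.sum_prod_type]
    refine Finset.sum_congr rfl fun k _ => Finset.sum_congr rfl fun l _ => ?_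
    rw [term_pow hd, smul_mul_smul_comm, ← ch_add, W_mul_of_sy hd]
    · simp [Fin.consEquiv, Fin.sum_univ_succ]
    · rw [sy_anti, sy_smul, sy_anti, sy_sum _ _ (fun i => h _ _)]; simp

theorem closure_eq {r : ℕ} (v : Fin r → QV d n × QV d n) :
    ((AddSubgroup.closure (Set.range v) : AddSubgroup (QV d n × QV d n)) : Set (QV d n × QV d n)) =
      Set.range fun k : Fin r → ZMod d => ∑ i, k i • v i := by
  let φ := Fintype.linearCombination (ZMod d) v
  have : AddSubgroup.closure (Set.range v) = (LinearMap.range φ).toAddSubgroup := by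
    apply le_antisymm
    · rw [AddSubgroup.closure_le]
      rintro _ ⟨i, rfl⟩
      refine ⟨Pi.single i 1, ?_⟩
      simp [φ]
    · rintro _ ⟨k, rfl⟩
      rw [Fintype.linearCombination_apply]
      exact sum_mem fun i _ => ZMod.smul_mem (AddSubgroup.subset_closure (Set.mem_range_self i)) _
  rw [this]
  rfl

theorem card_closure_iff {r : ℕ} (v : Fin r → QV d n × QV d n) :
    Nat.card (AddSubgroup.closure (Set.range v) : AddSubgroup (QV d n × QV d n)) = d ^ r ↔
      Function.Injective fun k : Fin r → ZMod d => ∑ i, k i • v i := by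
  have h1 : Nat.card (AddSubgroup.closure (Set.range v) : AddSubgroup (QV d n × QV d n)) =
      (Set.range fun k : Fin r → ZMod d => ∑ i, k i • v i).ncard := by
    rw [← closure_eq]; rfl
  have h2 : d ^ r = (Set.univ : Set (Fin r → ZMod d)).ncard := by
    simp [Set.ncard_univ, Nat.card_eq_fintype_card, ZMod.card]
  rw [h1, h2, ← Set.image_univ]
  constructor
  · intro h
    exact Set.injOn_univ.1 (Set.injOn_of_ncard_image_eq h)
  · intro h
    exact Set.ncard_image_of_injective _ h

open scoped MatrixOrder in
theorem mul_eq_zero_of_trace {ρ A : Mat d n} (hρ : ρ.PosSemidef) (h : (A * ρ * Aᴴ).trace = 0) :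
    A * ρ = 0 := by
  have h1 := (hρ.mul_mul_conjTranspose_same A).trace_eq_zero_iff.1 h
  obtain ⟨B, rfl⟩ := CStarAlgebra.nonneg_iff_eq_star_mul_self.mp hρ.nonneg
  rw [Matrix.star_eq_conjTranspose] at *
  have h2 : (A * Bᴴ) * (A * Bᴴ)ᴴ = 0 := by
    rw [Matrix.conjTranspose_mul, Matrix.conjTranspose_conjTranspose]
    simpa only [Matrix.mul_assoc] using h1
  rw [← Matrix.mul_assoc, Matrix.self_mul_conjTranspose_eq_zero.1 h2, Matrix.zero_mul]

theorem eigen {ρ U : Mat d n} (hρ : IsState d n ρ) (hU : Uᴴ * U = 1)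
    (hc : ‖(ρ * U).trace‖ = 1) : U * ρ = (ρ * U).trace • ρ := by
  set c := (ρ * U).trace with hcdef
  have hcc : star c * c = 1 := by
    have := Complex.conj_mul' c
    rw [hc] at this; simpa using this
  have hst : (ρ * Uᴴ).trace = star c := by
    rw [hcdef, ← Matrix.trace_conjTranspose, Matrix.conjTranspose_mul, hρ.1.1.eq,
      Matrix.trace_mul_comm]
  have h := mul_eq_zero_of_trace (A := U - c • 1) hρ.1 (by
    rw [Matrix.mul_assoc, Matrix.trace_mul_comm, Matrix.mul_assoc]
    have : (U - c • (1 : Mat d n))ᴴ * (U - c • 1) = (1 + star c * c) • 1 - c • Uᴴ - star c • U := by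
      simp only [Matrix.conjTranspose_sub, Matrix.conjTranspose_smul, Matrix.conjTranspose_one,
        sub_mul, mul_sub, hU, smul_mul_assoc, mul_smul_comm, one_mul, mul_one]
      module
    rw [this, hcc, mul_sub, mul_sub, Matrix.trace_sub, Matrix.trace_sub]
    simp only [mul_smul_comm, Matrix.trace_smul, mul_one, hst, ← hcdef, hρ.2, smul_eq_mul]
    linear_combination (-2) * hcc)
  rw [sub_mul, smul_mul_assoc, one_mul, sub_eq_zero] at h
  exact h

theorem magicGap_eq_zero_iff (ρ : Mat d n) :
    magicGap d n ρ = 0 ↔ ∀ a, xi d n ρ a ≠ 0 → ‖xi d n ρ a‖ = 1 := by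
  unfold magicGap
  dsimp only
  constructor
  · intro h a ha
    by_contra hne
    split_ifs at h with hs
    · have := Finset.max'_mem _ hs
      obtain ⟨b, hb, hb'⟩ := Finset.mem_image.1 this
      have hb2 := (Finset.mem_filter.1 hb).2.2
      apply hb2
      rw [hb']; linarith
    · exact hs ⟨_, Finset.mem_image_of_mem _ (Finset.mem_filter.2 ⟨Finset.mem_univ a, ha, hne⟩)⟩
  · intro h
    rw [dif_neg]
    rintro ⟨y, hy⟩
    obtain ⟨b, hb, -⟩ := Finset.mem_image.1 hy
    obtain ⟨-, h1, h2⟩ := Finset.mem_filter.1 hb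
    exact h2 (h b h1)

theorem backward (hd : Odd d) {ρ : Mat d n} (h : IsMSPS d n ρ) (a : QV d n × QV d n)
    (ha : xi d n ρ a ≠ 0) : ‖xi d n ρ a‖ = 1 := by
  have hd0 : (d : ℂ) ≠ 0 := by exact_mod_cast (Fact.out : d.Prime).ne_zero
  obtain ⟨r, hr, p, q, x, hcomm, hcard, rfl⟩ := h
  have hinj := (card_closure_iff (fun i => (p i, q i))).1 hcard
  have hsy : ∀ i j, sy (p i, q i) (p j, q j) = 0 := fun i j => sy_of_commute hd (hcomm i j)
  have hexp := prod_expand hd (fun i => (p i, q i)) x hsy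
  dsimp only at hexp hinj
  rw [hexp, smul_smul, ← mul_inv, ← pow_add, Nat.sub_add_cancel hr] at ha ⊢
  have hval : xi d n (((d : ℂ) ^ n)⁻¹ • ∑ k : Fin r → ZMod d, ch d (∑ i, k i * x i) •
      W (∑ i, k i • (p i, q i))) a =
      ∑ k : Fin r → ZMod d, if ∑ i, k i • (p i, q i) = a then ch d (∑ i, k i * x i) else 0 := by
    rw [xi_eq, smul_mul_assoc, Matrix.trace_smul, Finset.sum_mul, Matrix.trace_sum, smul_eq_mul,
      Finset.mul_sum]
    refine Finset.sum_congr rfl fun k _ => ?_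
    rw [smul_mul_assoc, W_mul hd, Matrix.trace_smul, Matrix.trace_smul, trace_W, ← sub_eq_add_neg]
    simp only [sub_eq_zero, smul_eq_mul]
    split_ifs with hk
    · have : sy a (-a) = 0 := by rw [sy_anti, sy_neg_self, neg_zero]
      rw [hk, this, mul_zero, ch_zero]
      field_simp
    · simp
  rw [hval] at ha ⊢
  obtain ⟨k, -, hk⟩ := Finset.exists_ne_zero_of_sum_ne_zero ha
  have hk' : ∑ i, k i • (p i, q i) = a := by
    by_contra hne; rw [if_neg hne] at hk; exact hk rfl
  rw [Finset.sum_eq_single k, if_pos hk', ch_norm]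
  · intro l _ hl
    rw [if_neg]
    intro h; exact hl (hinj (h.trans hk'.symm))
  · simp

theorem forward (hd : Odd d) {ρ : Mat d n} (hρ : IsState d n ρ)
    (h : ∀ a, xi d n ρ a ≠ 0 → ‖xi d n ρ a‖ = 1) : IsMSPS d n ρ := by
  have hd0 : (d : ℂ) ≠ 0 := by exact_mod_cast (Fact.out : d.Prime).ne_zero
  have hρ0 : ρ ≠ 0 := by
    rintro rfl
    have := hρ.2
    simp at this
  -- eigenvalue form: `ρ = c • W a * ρ`
  have hW0 : ∀ a, W a * ρ ≠ 0 := by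
    intro a h0
    apply hρ0
    rw [← one_mul ρ, ← W_neg_mul hd a, mul_assoc, h0, mul_zero]
  have e1 : ∀ a, xi d n ρ a ≠ 0 → W (-a) * ρ = xi d n ρ a • ρ := by
    intro a ha
    refine eigen hρ ?_ (h a ha)
    rw [W_star _ hd, W_neg_mul hd]
  have e2 : ∀ a (c : ℂ), W (-a) * ρ = c • ρ → xi d n ρ a = c := by
    intro a c hc
    rw [xi_eq, Matrix.trace_mul_comm, hc, Matrix.trace_smul, hρ.2, smul_eq_mul, mul_one]
  have e3 : ∀ a, xi d n ρ a ≠ 0 → xi d n ρ a • (W a * ρ) = ρ := by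
    intro a ha
    rw [← mul_smul_comm, ← e1 a ha, ← mul_assoc, ← one_mul ρ, ← W_neg_mul hd (-a), neg_neg]
    simp only [mul_assoc]
    congr 1
    rw [← mul_assoc (W (-a)), W_neg_mul hd, one_mul]
  have hsy : ∀ a b, xi d n ρ a ≠ 0 → xi d n ρ b ≠ 0 → sy a b = 0 := by
    intro a b ha hb
    have hh : sy (-a) (-b) = 0 := by
      apply sy_of_smul_comm hd (hW0 _)
      rw [mul_assoc, mul_assoc, e1 a ha, e1 b hb, mul_smul_comm, mul_smul_comm, e1 a ha, e1 b hb,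
        smul_smul, smul_smul, mul_comm]
    simpa [sy, qdot_eq] using hh
  have hadd : ∀ a b, xi d n ρ a ≠ 0 → xi d n ρ b ≠ 0 →
      xi d n ρ (a + b) = xi d n ρ a * xi d n ρ b := by
    intro a b ha hb
    apply e2
    rw [neg_add, ← W_mul_of_sy hd, mul_assoc, e1 b hb, mul_smul_comm, e1 a ha, smul_smul, mul_comm]
    have := hsy a b ha hb
    simpa [sy, qdot_eq] using this
  have hzero : xi d n ρ 0 = 1 := by
    apply e2; rw [neg_zero, W_zero, one_mul, one_smul]
  let S : AddSubgroup (QV d n × QV d n) :=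
    { carrier := {a | xi d n ρ a ≠ 0}
      zero_mem' := by simp [hzero]
      add_mem' := by
        intro a b ha hb
        simp only [Set.mem_ofPred_eq] at *
        rw [hadd a b ha hb]; exact mul_ne_zero ha hb
      neg_mem' := by
        intro a ha
        simp only [Set.mem_ofPred_eq] at *
        have := e3 a ha
        rw [e2 (-a) (xi d n ρ a)⁻¹]
        · exact inv_ne_zero ha
        · rw [neg_neg, eq_inv_smul_iff₀ ha]; exact this }
  let M : Submodule (ZMod d) (QV d n × QV d n) := AddSubgroup.toZModSubmodule d S
  have hM : ∀ a, a ∈ M ↔ xi d n ρ a ≠ 0 := fun a => Iff.rfl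
  let r := Module.finrank (ZMod d) M
  let b : Module.Basis (Fin r) (ZMod d) M := Module.finBasis (ZMod d) M
  let v : Fin r → QV d n × QV d n := fun i => (b i : QV d n × QV d n)
  have hv : ∀ i, xi d n ρ (v i) ≠ 0 := fun i => (hM _).1 (b i).2
  have hlin : ∀ k : Fin r → ZMod d, ∑ i, k i • v i = ((b.equivFun.symm k : M) : QV d n × QV d n) := by
    intro k
    rw [Module.Basis.equivFun_symm_apply]
    simp [v]
  have hinj : Function.Injective fun k : Fin r → ZMod d => ∑ i, k i • v i := by
    intro k l hkl
    simp only [hlin] at hkl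
    exact b.equivFun.symm.injective (Subtype.ext hkl)
  have hpow : ∀ a (k : ℕ), xi d n ρ a ≠ 0 → xi d n ρ ((k : ZMod d) • a) = xi d n ρ a ^ k := by
    intro a k ha
    induction k with
    | zero => simp [hzero]
    | succ k ih =>
      push_cast
      rw [add_smul, one_smul, hadd _ _ (by rw [ih]; exact pow_ne_zero _ ha) ha, ih, pow_succ]
  have hx : ∀ i, ∃ x : ZMod d, ch d x = xi d n ρ (v i) := by
    intro i
    apply exists_ch
    rw [← hpow _ _ (hv i)]
    simp [hzero]
  choose x hx using hx
  have hxi : ∀ (s : ℕ) (v : Fin s → QV d n × QV d n) (x : Fin s → ZMod d)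
      (_ : ∀ i, ch d (x i) = xi d n ρ (v i)) (k : Fin s → ZMod d),
      xi d n ρ (∑ i, k i • v i) = ch d (∑ i, k i * x i) := by
    intro s
    induction s with
    | zero => intros; simp [hzero, ch_zero]
    | succ s ih =>
      intro v x hx k
      have i1 := ih (fun i => v i.succ) (fun i => x i.succ) (fun i => hx _) (fun i => k i.succ)
      have i2 : xi d n ρ (k 0 • v 0) = ch d (k 0 * x 0) := by
        have := hpow (v 0) (k 0).val (by rw [← hx]; exact ch_ne _)
        rw [← hx, ch_pow, ZMod.natCast_zmod_val] at this
        exact this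
      rw [Fin.sum_univ_succ, Fin.sum_univ_succ, hadd, i1, i2, ch_add]
      · rw [i2]; exact ch_ne _
      · rw [i1]; exact ch_ne _
  have hexp : ρ = ((d : ℂ) ^ n)⁻¹ • ∑ k : Fin r → ZMod d,
      ch d (∑ i, k i * x i) • W (∑ i, k i • v i) := by
    conv_lhs => rw [complete hd ρ]
    congr 1
    symm
    have : ∀ k : Fin r → ZMod d, ch d (∑ i, k i * x i) • W (∑ i, k i • v i) =
      (fun a => xi d n ρ a • W a) (∑ i, k i • v i) := by
      intro k
      simp only [hxi r v x hx k]
    rw [Finset.sum_congr rfl fun k _ => this k]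
    refine Finset.sum_of_injOn (fun k => ∑ i, k i • v i) hinj.injOn (by simp) ?_ (by simp)
    intro a _ ha
    by_cases h0 : xi d n ρ a = 0
    · rw [h0, zero_smul]
    · exfalso; apply ha
      refine ⟨b.equivFun ⟨a, (hM a).2 h0⟩, by simp, ?_⟩
      simp only [hlin, LinearEquiv.symm_apply_apply]
  have hsq : ρ * ρ = ((d : ℂ) ^ r / (d : ℂ) ^ n) • ρ := by
    conv_lhs => lhs; rw [hexp]
    rw [smul_mul_assoc, Finset.sum_mul]
    have : ∀ k : Fin r → ZMod d, ch d (∑ i, k i * x i) • W (∑ i, k i • v i) * ρ = ρ := by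
      intro k
      rw [← hxi r v x hx k, smul_mul_assoc]
      apply e3
      rw [hxi r v x hx k]; exact ch_ne _
    rw [Finset.sum_congr rfl fun k _ => this k]
    rw [Finset.sum_const, ← Nat.cast_smul_eq_nsmul ℂ, smul_smul]
    congr 1
    simp [ZMod.card]
    ring
  have hrn : r ≤ n := by
    by_contra hlt
    push Not at hlt
    let P : Mat d n := ((d : ℂ) ^ n / (d : ℂ) ^ r) • ρ
    have hP : IsIdempotentElem P := by
      change P * P = P
      simp only [P]
      rw [smul_mul_smul_comm, hsq, smul_smul]
      congr 1
      field_simp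
    have hP' : IsIdempotentElem (Matrix.toLin' P) := by
      change Matrix.toLin' P * Matrix.toLin' P = Matrix.toLin' P
      rw [Module.End.mul_eq_comp, ← Matrix.toLin'_mul, hP.eq]
    have ht := (LinearMap.IsIdempotentElem.isProj_range _ hP').trace
    rw [Matrix.trace_toLin'_eq] at ht
    simp only [P, Matrix.trace_smul, hρ.2, smul_eq_mul, mul_one] at ht
    have hr0 : (d : ℂ) ^ r ≠ 0 := pow_ne_zero _ hd0
    rw [div_eq_iff hr0] at ht
    have ht' : d ^ n = Module.finrank ℂ (LinearMap.range (Matrix.toLin' P)) * d ^ r := by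
      exact_mod_cast ht
    have h1 : d ^ r ∣ d ^ n := ⟨_, ht'.trans (mul_comm _ _)⟩
    have h2 := (Nat.pow_dvd_pow_iff_le_right (Fact.out : d.Prime).one_lt).1 h1
    omega
  refine ⟨r, hrn, fun i => (v i).1, fun i => (v i).2, x, ?_, (card_closure_iff v).2 hinj, ?_⟩
  · intro i j
    change W (v i) * W (v j) = W (v j) * W (v i)
    rw [W_mul_of_sy hd (hsy _ _ (hv i) (hv j)), W_mul_of_sy hd (hsy _ _ (hv j) (hv i)), add_comm]
  · rw [prod_expand hd v x (fun i j => hsy _ _ (hv i) (hv j)), smul_smul, ← mul_inv, ← pow_add,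
      Nat.sub_add_cancel hrn]
    exact hexp

end aux


/-- For every `n`-qudit state `ρ`: `MG(ρ) = 0` iff `ρ` is a minimal
stabilizer-projection state. -/
theorem statement4 (d n : ℕ) [Fact (Nat.Prime d)] (hd : Odd d) (hn : 1 ≤ n)
    (ρ : Mat d n) (hρ : IsState d n ρ) :
    magicGap d n ρ = 0 ↔ IsMSPS d n ρ := by
  rw [magicGap_eq_zero_iff]
  exact ⟨fun h => forward hd hρ h, fun h a ha => backward hd h a ha⟩

end PaperQI
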